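/- Let (p_i)_{i∈ℕ} be points of a bounded subset of ℝ² and let (Ω_i), (b^i_1), (b^i_2), (b^i_3) be real numbers with ∑_i (|Ω_i| + |b^i_1| + |b^i_2| + |b^i_3|) < ∞. Writing δx_i = x − p^i_1, δy_i = y − p^i_2, r_i² = δx_i² + δy_i², define on ℝ² the strain components E_xz := −∑_i b^i_3 δy_i/(2π r_i²), E_yz := ∑_i b^i_3 δx_i/(2π r_i²), and E_xx := ∑_i [ (−b^i_2 δx_i − b^i_1 δy_i)/(2π r_i²) + (Ω_i/4π)(log r_i + δy_i²/r_i²) ], E_xy := ∑_i [ (−b^i_2 δy_i + b^i_1 δx_i)/(2π r_i²) − (Ω_i/4π) δx_i δy_i/r_i² ], E_yy := ∑_i [ (b^i_2 δx_i + b^i_1 δy_i)/(2π r_i²) + (Ω_i/4π)(log r_i + δx_i²/r_i²) ]. Then every series converges absolutely for Lebesgue-almost every point, each component is integrable on every bounded measurable subset of ℝ², and distributionally: (a) ∂_y²E_xx + ∂_x²E_yy − 2∂_x∂_yE_xy = ∑_i ( Ω_i δ_{p_i} + b^i_2 ∂_x δ_{p_i} − b^i_1 ∂_y δ_{p_i}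 ); and (b) ∂_x E_yz − ∂_y E_xz = ∑_i b^i_3 δ_{p_i}. -/

import Mathlib

open MeasureTheory Real

/-- Partial derivative in the `α`-th coordinate direction of a function on `ℝ²`. -/
noncomputable def pd (α : Fin 2) (f : EuclideanSpace ℝ (Fin 2) → ℝ) :
    EuclideanSpace ℝ (Fin 2) → ℝ :=
  fun x => fderiv ℝ f x (EuclideanSpace.single α 1)

/-- `E_xz` term of a screw dislocation at `q` with Burgers weight `b₃`:
`−b₃ δy / (2π r²)`. -/
noncomputable def tExz (b3 : ℝ) (q x : EuclideanSpace ℝ (Fin 2)) : ℝ :=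
  -b3 * (x 1 - q 1) / (2 * π * ((x 0 - q 0) ^ 2 + (x 1 - q 1) ^ 2))

/-- `E_yz` term of a screw dislocation at `q`: `b₃ δx / (2π r²)`. -/
noncomputable def tEyz (b3 : ℝ) (q x : EuclideanSpace ℝ (Fin 2)) : ℝ :=
  b3 * (x 0 - q 0) / (2 * π * ((x 0 - q 0) ^ 2 + (x 1 - q 1) ^ 2))

/-- `E_xx` term of an edge dislocation `(b₁, b₂)` plus wedge disclination `Ω` at `q`:
`(−b₂ δx − b₁ δy)/(2π r²) + (Ω/4π)(log r + δy²/r²)`. -/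
noncomputable def tExx (Ωi b1 b2 : ℝ) (q x : EuclideanSpace ℝ (Fin 2)) : ℝ :=
  (-b2 * (x 0 - q 0) - b1 * (x 1 - q 1))
      / (2 * π * ((x 0 - q 0) ^ 2 + (x 1 - q 1) ^ 2))
    + Ωi / (4 * π) * (Real.log (Real.sqrt ((x 0 - q 0) ^ 2 + (x 1 - q 1) ^ 2))
        + (x 1 - q 1) ^ 2 / ((x 0 - q 0) ^ 2 + (x 1 - q 1) ^ 2))

/-- `E_xy` term: `(−b₂ δy + b₁ δx)/(2π r²) − (Ω/4π) δx δy / r²`. -/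
noncomputable def tExy (Ωi b1 b2 : ℝ) (q x : EuclideanSpace ℝ (Fin 2)) : ℝ :=
  (-b2 * (x 1 - q 1) + b1 * (x 0 - q 0))
      / (2 * π * ((x 0 - q 0) ^ 2 + (x 1 - q 1) ^ 2))
    - Ωi / (4 * π) * ((x 0 - q 0) * (x 1 - q 1)
        / ((x 0 - q 0) ^ 2 + (x 1 - q 1) ^ 2))

/-- `E_yy` term: `(b₂ δx + b₁ δy)/(2π r²) + (Ω/4π)(log r + δx²/r²)`. -/
noncomputable def tEyy (Ωi b1 b2 : ℝ) (q x : EuclideanSpace ℝ (Fin 2)) : ℝ :=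
  (b2 * (x 0 - q 0) + b1 * (x 1 - q 1))
      / (2 * π * ((x 0 - q 0) ^ 2 + (x 1 - q 1) ^ 2))
    + Ωi / (4 * π) * (Real.log (Real.sqrt ((x 0 - q 0) ^ 2 + (x 1 - q 1) ^ 2))
        + (x 0 - q 0) ^ 2 / ((x 0 - q 0) ^ 2 + (x 1 - q 1) ^ 2))



abbrev EE := EuclideanSpace ℝ (Fin 2)

noncomputable def HH (v : EE) : ℝ := ‖v‖⁻¹ + 1 + ‖v‖

lemma HH_nonneg (v : EE) : 0 ≤ HH v := by unfold HH; positivity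

lemma HH_meas : Measurable HH := by unfold HH; fun_prop

lemma HH_int (R : ℝ) : Integrable (Set.indicator (Metric.closedBall 0 R) HH) := by
  have h : Set.indicator (Metric.closedBall 0 R) HH
      = fun v : EE => (Set.indicator (Set.Iic R) (fun t : ℝ => t⁻¹ + 1 + t)) ‖v‖ := by
    ext v
    simp [Set.indicator, HH]
  rw [h]
  refine (integrable_fun_norm_addHaar (volume : Measure EE)
    (f := Set.indicator (Set.Iic R) (fun t : ℝ => t⁻¹ + 1 + t))).2 ?_
  have h2 : IntegrableOn (fun y : ℝ => Set.indicator (Set.Iic R) (fun t : ℝ => 1 + t + t^2) y)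
      (Set.Ioi 0) := by
    rw [IntegrableOn, integrable_indicator_iff measurableSet_Iic, IntegrableOn,
      Measure.restrict_restrict measurableSet_Iic]
    have : Set.Iic R ∩ Set.Ioi (0:ℝ) ⊆ Set.Icc 0 R := fun x hx => ⟨le_of_lt hx.2, hx.1⟩
    exact (Continuous.integrableOn_Icc (by fun_prop)).mono_set this
  refine h2.congr_fun ?_ measurableSet_Ioi
  intro y hy
  have hy' : y ≠ 0 := ne_of_gt hy
  by_cases hR : y ≤ R
  · simp [Set.indicator, hR]
    field_simp
  · simp [Set.indicator, hR]

lemma unif (A P : Set EE) (hA : MeasurableSet A) (hAb : Bornology.IsBounded A)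
    (hP : Bornology.IsBounded P) :
    ∃ M : ℝ, 0 ≤ M ∧ ∀ q ∈ P, IntegrableOn (fun x => HH (x - q)) A ∧
      ∫ x in A, HH (x - q) ≤ M := by
  obtain ⟨R1, h1⟩ := hAb.subset_closedBall 0
  obtain ⟨R2, h2⟩ := hP.subset_closedBall 0
  set F := Set.indicator (Metric.closedBall (0:EE) (R1 + R2)) HH with hF
  have hFi : Integrable F := HH_int _
  have hF0 : ∀ v, 0 ≤ F v := fun v => Set.indicator_nonneg (fun x _ => HH_nonneg x) v
  refine ⟨∫ v, F v, integral_nonneg hF0, fun q hq => ?_⟩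
  have hcg : Set.EqOn (fun x => F (x - q)) (fun x => HH (x - q)) A := by
    intro x hx
    have a := h1 hx
    have b := h2 hq
    rw [mem_closedBall_zero_iff] at a b
    have : x - q ∈ Metric.closedBall (0:EE) (R1 + R2) := by
      rw [mem_closedBall_zero_iff]
      exact (norm_sub_le _ _).trans (by linarith)
    simp only [hF, Set.indicator_of_mem this]
  have hi : Integrable (fun x => F (x - q)) := hFi.comp_sub_right q
  refine ⟨hi.integrableOn.congr_fun hcg hA, ?_⟩
  rw [← setIntegral_congr_fun hA hcg, ← integral_sub_right_eq_self F q]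
  exact setIntegral_le_integral hi (Filter.Eventually.of_forall fun x => hF0 _)

structure Good (p : ℕ → EE) (w : ℕ → ℝ) (t : ℕ → EE → ℝ) : Prop where
  hp : Bornology.IsBounded (Set.range p)
  hw : Summable w
  hm : ∀ i, Measurable (t i)
  hb : ∀ i x, |t i x| ≤ w i * HH (x - p i)

lemma Good.w_nonneg {p : ℕ → EE} {w t} (h : Good p w t) (i) : 0 ≤ w i := by
  have h1 := (abs_nonneg _).trans (h.hb i (p i))
  have : HH (p i - p i) = 1 := by simp [HH]
  rwa [this, mul_one] at h1

lemma Good.base {p : ℕ → EE} {w t} (h : Good p w t) (A : Set EE) (hA : MeasurableSet A)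
    (hAb : Bornology.IsBounded A) :
    (∀ i, IntegrableOn (t i) A) ∧ Summable (fun i => ∫ x in A, ‖t i x‖) := by
  obtain ⟨M, hM0, hM⟩ := unif A _ hA hAb h.hp
  have hi : ∀ i, IntegrableOn (t i) A := fun i =>
    Integrable.mono' ((hM (p i) ⟨i, rfl⟩).1.const_mul (w i)) (h.hm i).aestronglyMeasurable
      (Filter.Eventually.of_forall (h.hb i))
  refine ⟨hi, Summable.of_nonneg_of_le (fun i => integral_nonneg fun x => norm_nonneg _)
    (fun i => ?_) (h.hw.mul_right M)⟩
  calc ∫ x in A, ‖t i x‖ ≤ ∫ x in A, w i * HH (x - p i) :=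
        integral_mono (hi i).norm ((hM (p i) ⟨i, rfl⟩).1.const_mul (w i)) (h.hb i)
    _ = w i * ∫ x in A, HH (x - p i) := integral_const_mul _ _
    _ ≤ w i * M := mul_le_mul_of_nonneg_left (hM (p i) ⟨i, rfl⟩).2 (h.w_nonneg i)

lemma tsum_lint {α : Type*} [MeasurableSpace α] {μ : Measure α} {t : ℕ → α → ℝ}
    (h1 : ∀ i, Integrable (t i) μ) (h2 : Summable fun i => ∫ x, ‖t i x‖ ∂μ) :
    ∑' i, ∫⁻ x, ‖t i x‖ₑ ∂μ ≠ ⊤ := by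
  have : ∀ i, ∫⁻ x, ‖t i x‖ₑ ∂μ = ENNReal.ofReal (∫ x, ‖t i x‖ ∂μ) := fun i =>
    (ofReal_integral_norm_eq_lintegral_enorm (h1 i)).symm
  simp_rw [this]
  rw [← ENNReal.ofReal_tsum_of_nonneg (fun i => integral_nonneg fun x => norm_nonneg _) h2]
  exact ENNReal.ofReal_ne_top

lemma ae_sum {α : Type*} [MeasurableSpace α] {μ : Measure α} {t : ℕ → α → ℝ}
    (h1 : ∀ i, Integrable (t i) μ) (h2 : Summable fun i => ∫ x, ‖t i x‖ ∂μ) :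
    ∀ᵐ x ∂μ, Summable fun i => ‖t i x‖ := by
  refine summable_norm_of_tsum_eLpNorm_ne_top (p := 1) le_rfl
    (fun i => (h1 i).aestronglyMeasurable) ?_
  simp_rw [eLpNorm_one_eq_lintegral_enorm]
  exact tsum_lint h1 h2

lemma int_tsum {α : Type*} [MeasurableSpace α] {μ : Measure α} {t : ℕ → α → ℝ}
    (h1 : ∀ i, Integrable (t i) μ) (h2 : Summable fun i => ∫ x, ‖t i x‖ ∂μ) :
    Integrable (fun x => ∑' i, t i x) μ := by
  refine ⟨?_, ?_⟩
  · refine aestronglyMeasurable_of_tendsto_ae Filter.atTop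
      (f := fun n x => ∑ i ∈ Finset.range n, t i x) (fun n => ?_) ?_
    · exact (integrable_finsetSum _ (fun i _ => h1 i)).aestronglyMeasurable
    · filter_upwards [ae_sum h1 h2] with x hx
      exact (Summable.of_norm hx).hasSum.tendsto_sum_nat
  · refine lt_of_le_of_lt (lintegral_mono (fun x => enorm_tsum_le_tsum_enorm)) ?_
    rw [lintegral_tsum (fun i => (h1 i).aestronglyMeasurable.enorm)]
    exact (tsum_lint h1 h2).lt_top

lemma Good.ae {p : ℕ → EE} {w t} (h : Good p w t) :
    ∀ᵐ x : EE, Summable fun i => |t i x| := by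
  have : ∀ n : ℕ, ∀ᵐ x : EE, x ∈ Metric.closedBall (0:EE) n → Summable fun i => |t i x| := by
    intro n
    rw [← ae_restrict_iff' Metric.isClosed_closedBall.measurableSet]
    have := h.base (Metric.closedBall 0 n) Metric.isClosed_closedBall.measurableSet
      Metric.isBounded_closedBall
    exact ae_sum this.1 this.2
  filter_upwards [ae_all_iff.2 this] with x hx
  obtain ⟨n, hn⟩ := exists_nat_ge ‖x‖
  exact hx n (by simpa using hn)

lemma Good.intOn {p : ℕ → EE} {w t} (h : Good p w t) (A : Set EE) (hA : MeasurableSet A)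
    (hAb : Bornology.IsBounded A) : IntegrableOn (fun x => ∑' i, t i x) A :=
  int_tsum (h.base A hA hAb).1 (h.base A hA hAb).2

lemma Good.test {p : ℕ → EE} {w t} (h : Good p w t) (g : EE → ℝ) (hg : Continuous g)
    (hc : HasCompactSupport g) :
    (∀ i, Integrable (fun x => t i x * g x)) ∧ Integrable (fun x => (∑' i, t i x) * g x) ∧
    HasSum (fun i => ∫ x, t i x * g x) (∫ x, (∑' i, t i x) * g x) := by
  obtain ⟨C, hC⟩ := hg.bounded_above_of_compact_support hc
  have hC0 : 0 ≤ C := (norm_nonneg _).trans (hC 0)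
  have hK : MeasurableSet (tsupport g) := (isClosed_tsupport g).measurableSet
  have hB := h.base (tsupport g) hK hc.isBounded
  have key : ∀ f : EE → ℝ, IntegrableOn f (tsupport g) → Integrable (fun x => f x * g x) := by
    intro f hf
    rw [← integrableOn_iff_integrable_of_support_subset (s := tsupport g)]
    · exact Integrable.mul_bdd (c := C) hf hg.aestronglyMeasurable
        (Filter.Eventually.of_forall hC)
    · exact (Function.support_mul_subset_right f g).trans (subset_tsupport g)
  refine ⟨fun i => key _ (hB.1 i), key _ (h.intOn _ hK hc.isBounded), ?_⟩
  have := hasSum_integral_of_summable_integral_norm (F := fun i x => t i x * g x)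
    (μ := (volume : Measure EE)) (fun i => key _ (hB.1 i)) ?_
  · simpa only [tsum_mul_right] using this
  · refine Summable.of_nonneg_of_le (fun i => integral_nonneg fun x => norm_nonneg _)
      (fun i => ?_) (hB.2.mul_right C)
    rw [← setIntegral_eq_integral_of_forall_compl_eq_zero (s := tsupport g), ← integral_mul_const]
    · refine integral_mono (key _ (hB.1 i)).norm.integrableOn ((hB.1 i).norm.mul_const C) ?_
      intro x
      simp only [norm_mul]
      exact mul_le_mul_of_nonneg_left (hC x) (norm_nonneg _)
    · intro x hx
      simp [image_eq_zero_of_notMem_tsupport hx]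


lemma r2_eq (q x : EE) : (x 0 - q 0) ^ 2 + (x 1 - q 1) ^ 2 = ‖x - q‖ ^ 2 := by
  rw [EuclideanSpace.real_norm_sq_eq]
  simp [Fin.sum_univ_two]

lemma coord_le (q x : EE) (α : Fin 2) : |x α - q α| ≤ ‖x - q‖ := by
  have := PiLp.norm_apply_le (x - q) α
  simpa using this

lemma K_bound (q x : EE) (α : Fin 2) {ε : ℝ} (hε : 0 ≤ ε) :
    |(x α - q α) / (‖x - q‖ ^ 2 + ε)| ≤ ‖x - q‖⁻¹ := by
  have h := coord_le q x α
  rcases eq_or_lt_of_le (norm_nonneg (x - q)) with h0 | h0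
  · rw [← h0] at h ⊢
    have : x α - q α = 0 := abs_nonpos_iff.1 h
    simp [this]
  · rw [abs_div, abs_of_pos (by positivity : 0 < ‖x - q‖ ^ 2 + ε), div_le_iff₀ (by positivity)]
    have : ‖x - q‖⁻¹ * (‖x - q‖ ^ 2 + ε) = ‖x - q‖ + ‖x - q‖⁻¹ * ε := by
      field_simp
    rw [this]
    have : 0 ≤ ‖x - q‖⁻¹ * ε := by positivity
    linarith

lemma log_bound {r ε : ℝ} (hr : 0 < r) (h0 : 0 ≤ ε) (h1 : ε ≤ 1) :
    |1 / 2 * Real.log (r ^ 2 + ε)| ≤ r⁻¹ + r := by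
  have hi : 0 < r⁻¹ := by positivity
  have a : Real.log (r ^ 2 + ε) ≤ 2 * r := by
    have : Real.log (r ^ 2 + ε) ≤ Real.log ((1 + r) ^ 2) :=
      Real.log_le_log (by positivity) (by nlinarith)
    rw [Real.log_pow] at this
    have h3 := Real.log_le_sub_one_of_pos (by positivity : 0 < 1 + r)
    push_cast at this
    linarith
  have b : 2 * (1 - r⁻¹) ≤ Real.log (r ^ 2 + ε) := by
    have : Real.log (r ^ 2) ≤ Real.log (r ^ 2 + ε) :=
      Real.log_le_log (by positivity) (by linarith)
    rw [Real.log_pow] at this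
    have h3 := Real.one_sub_inv_le_log_of_pos hr
    push_cast at this
    linarith
  rw [abs_le]
  constructor <;> linarith

lemma logsqrt (q x : EE) : Real.log (Real.sqrt ((x 0 - q 0) ^ 2 + (x 1 - q 1) ^ 2))
    = 1 / 2 * Real.log (‖x - q‖ ^ 2) := by
  rw [Real.log_sqrt (by positivity), r2_eq]
  ring

lemma log_bound' (q x : EE) : |1 / 2 * Real.log (‖x - q‖ ^ 2)| ≤ ‖x - q‖⁻¹ + ‖x - q‖ := by
  rcases eq_or_lt_of_le (norm_nonneg (x - q)) with h0 | h0
  · rw [← h0]; simp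
  · simpa using log_bound h0 le_rfl zero_le_one

lemma inv_le_HH (v : EE) : ‖v‖⁻¹ ≤ HH v := by
  unfold HH; linarith [norm_nonneg v]

lemma testInt (q : EE) (w : ℝ) (f : EE → ℝ) (hf : Measurable f)
    (hb : ∀ x, |f x| ≤ w * HH (x - q)) (g : EE → ℝ) (hg : Continuous g)
    (hc : HasCompactSupport g) : Integrable (fun x => f x * g x) := by
  have h : Good (fun _ => q) (fun i => w * (1 / 2) ^ i) (fun i x => (1 / 2) ^ i * f x) := by
    refine ⟨?_, ?_, ?_, ?_⟩
    · exact (Set.finite_range_const (c := q)).isBounded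
    · exact summable_geometric_two.mul_left w
    · intro i; fun_prop
    · intro i x
      rw [abs_mul, abs_of_pos (by positivity)]
      have := mul_le_mul_of_nonneg_left (hb x) (by positivity : (0:ℝ) ≤ (1 / 2) ^ i)
      linarith
  simpa using (h.test g hg hc).1 0

lemma pd_cont (α : Fin 2) {ψ : EE → ℝ} (h : ContDiff ℝ 1 ψ) : Continuous (pd α ψ) :=
  (h.continuous_fderiv one_ne_zero).clm_apply continuous_const

lemma pd_cs (α : Fin 2) {ψ : EE → ℝ} (h : HasCompactSupport ψ) : HasCompactSupport (pd α ψ) :=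
  h.fderiv_apply ℝ _

lemma pd_smooth (α : Fin 2) {ψ : EE → ℝ} (h : ContDiff ℝ (⊤ : ℕ∞) ψ) :
    ContDiff ℝ (⊤ : ℕ∞) (pd α ψ) :=
  (h.fderiv_right (m := (⊤ : ℕ∞)) (by simp)).clm_apply contDiff_const

lemma pd_comm {ψ : EE → ℝ} (h : ContDiff ℝ (⊤ : ℕ∞) ψ) (x : EE) :
    pd 1 (pd 0 ψ) x = pd 0 (pd 1 ψ) x := by
  have hs : IsSymmSndFDerivAt ℝ ψ x :=
    (contDiff_infty.1 h 2).contDiffAt.isSymmSndFDerivAt (by simp)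
  have hd : DifferentiableAt ℝ (fderiv ℝ ψ) x :=
    ((h.fderiv_right (m := (⊤ : ℕ∞)) (by simp)).differentiable (by simp)) x
  unfold pd
  rw [fderiv_clm_apply hd (by fun_prop), fderiv_clm_apply hd (by fun_prop)]
  simpa using hs _ _

lemma u_deriv (q x : EE) {ε : ℝ} (hε : 0 < ε) :
    HasFDerivAt (fun x : EE => 1 / 2 * Real.log (‖x - q‖ ^ 2 + ε))
      ((‖x - q‖ ^ 2 + ε)⁻¹ • (innerSL ℝ (x - q))) x := by
  have h1 : HasFDerivAt (fun x : EE => ‖x - q‖ ^ 2) (2 • (innerSL ℝ (x - q))) x := by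
    simpa using ((hasFDerivAt_id x).sub_const q).norm_sq
  have h2 := ((h1.add_const ε).log (by positivity)).const_mul (1 / 2)
  refine h2.congr_fderiv ?_
  ext v
  simp
  ring

lemma weakLog (q : EE) (α : Fin 2) {ψ : EE → ℝ} (hψ : ContDiff ℝ 1 ψ)
    (hc : HasCompactSupport ψ) :
    ∫ x : EE, 1 / 2 * Real.log (‖x - q‖ ^ 2) * pd α ψ x
      = - ∫ x : EE, (x α - q α) / ‖x - q‖ ^ 2 * ψ x := by
  let ε : ℕ → ℝ := fun n => 1 / ((n:ℝ) + 1)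
  have hε : ∀ n, 0 < ε n := fun n => by positivity
  have hε1 : ∀ n, ε n ≤ 1 := fun n => by
    simp only [ε]; rw [div_le_one (by positivity)]; linarith [n.cast_nonneg (α := ℝ)]
  have hlim : Filter.Tendsto ε Filter.atTop (nhds 0) := tendsto_one_div_add_atTop_nhds_zero_nat
  have hpc := pd_cont α hψ
  have hps := pd_cs α hc
  have hlogc : ∀ n, Continuous (fun x : EE => 1 / 2 * Real.log (‖x - q‖ ^ 2 + ε n)) := fun n =>
    continuous_const.mul (Continuous.log (by fun_prop) (fun x => by have := hε n; positivity))
  have hKc : ∀ n, Continuous (fun x : EE => (x α - q α) / (‖x - q‖ ^ 2 + ε n)) := fun n =>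
    Continuous.div (by fun_prop) (by fun_prop) (fun x => by have := hε n; positivity)
  have hfd : ∀ n x, fderiv ℝ (fun x : EE => 1 / 2 * Real.log (‖x - q‖ ^ 2 + ε n)) x
      (EuclideanSpace.single α 1) = (x α - q α) / (‖x - q‖ ^ 2 + ε n) := by
    intro n x
    rw [(u_deriv q x (hε n)).fderiv]
    simp [EuclideanSpace.inner_single_right]
    ring
  have ibp : ∀ n, ∫ x : EE, 1 / 2 * Real.log (‖x - q‖ ^ 2 + ε n) * pd α ψ x
      = - ∫ x : EE, (x α - q α) / (‖x - q‖ ^ 2 + ε n) * ψ x := by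
    intro n
    have := integral_mul_fderiv_eq_neg_fderiv_mul_of_integrable (μ := (volume : Measure EE))
      (f := fun x : EE => 1 / 2 * Real.log (‖x - q‖ ^ 2 + ε n)) (g := ψ)
      (v := EuclideanSpace.single α 1) ?_ ?_ ?_ ?_ ?_
    · simp_rw [hfd] at this
      exact this
    · simp_rw [hfd]
      exact ((hKc n).mul hψ.continuous).integrable_of_hasCompactSupport hc.mul_left
    · exact ((hlogc n).mul hpc).integrable_of_hasCompactSupport hps.mul_left
    · exact ((hlogc n).mul hψ.continuous).integrable_of_hasCompactSupport hc.mul_left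
    · exact fun x _ => (u_deriv q x (hε n)).differentiableAt
    · exact fun x _ => (hψ.differentiable one_ne_zero) x
  have hae : ∀ᵐ x : EE, x ≠ q := by
    simp [ae_iff]
  have hHm : Measurable (fun x : EE => HH (x - q)) := HH_meas.comp (by fun_prop)
  have L1 : Filter.Tendsto (fun n => ∫ x : EE, 1 / 2 * Real.log (‖x - q‖ ^ 2 + ε n) * pd α ψ x)
      Filter.atTop (nhds (∫ x : EE, 1 / 2 * Real.log (‖x - q‖ ^ 2) * pd α ψ x)) := by
    refine tendsto_integral_of_dominated_convergence (fun x => HH (x - q) * |pd α ψ x|)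
      (fun n => ((hlogc n).mul hpc).aestronglyMeasurable) ?_ ?_ ?_
    · exact testInt q 1 _ hHm (fun x => by rw [abs_of_nonneg (HH_nonneg _), one_mul]) _
        hpc.abs hps.abs
    · intro n
      filter_upwards [hae] with x hx
      rw [norm_mul]
      refine mul_le_mul_of_nonneg_right ?_ (norm_nonneg _)
      have := log_bound (norm_pos_iff.2 (sub_ne_zero.2 hx)) (hε n).le (hε1 n)
      rw [Real.norm_eq_abs]
      unfold HH; linarith
    · filter_upwards [hae] with x hx
      have h0 : ‖x - q‖ ^ 2 ≠ 0 := pow_ne_zero _ (norm_ne_zero_iff.2 (sub_ne_zero.2 hx))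
      refine Filter.Tendsto.mul_const _ (Filter.Tendsto.const_mul _ (Filter.Tendsto.log ?_ h0))
      simpa using hlim.const_add (‖x - q‖ ^ 2)
  have L2 : Filter.Tendsto (fun n => ∫ x : EE, (x α - q α) / (‖x - q‖ ^ 2 + ε n) * ψ x)
      Filter.atTop (nhds (∫ x : EE, (x α - q α) / ‖x - q‖ ^ 2 * ψ x)) := by
    refine tendsto_integral_of_dominated_convergence (fun x => HH (x - q) * |ψ x|)
      (fun n => ((hKc n).mul hψ.continuous).aestronglyMeasurable) ?_ ?_ ?_
    · exact testInt q 1 _ hHm (fun x => by rw [abs_of_nonneg (HH_nonneg _), one_mul]) _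
        hψ.continuous.abs hc.abs
    · intro n
      refine Filter.Eventually.of_forall fun x => ?_
      rw [norm_mul]
      refine mul_le_mul_of_nonneg_right ?_ (norm_nonneg _)
      exact (K_bound q x α (hε n).le).trans (inv_le_HH _)
    · filter_upwards [hae] with x hx
      have h0 : ‖x - q‖ ^ 2 ≠ 0 := pow_ne_zero _ (norm_ne_zero_iff.2 (sub_ne_zero.2 hx))
      refine Filter.Tendsto.mul_const _ (Filter.Tendsto.div tendsto_const_nhds ?_ h0)
      simpa using hlim.const_add (‖x - q‖ ^ 2)
  refine tendsto_nhds_unique L1 ?_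
  simp_rw [ibp]
  exact L2.neg


lemma int_polar (f : EE → ℝ) : ∫ x : EE, f x
    = ∫ z in polarCoord.target, z.1 * f (!₂[z.1 * cos z.2, z.1 * sin z.2]) := by
  have hmp : MeasurePreserving ((MeasurableEquiv.finTwoArrow (α := ℝ)).symm.trans
      (MeasurableEquiv.toLp 2 (Fin 2 → ℝ))) :=
    (EuclideanSpace.volume_preserving_symm_measurableEquiv_toLp (Fin 2)).symm.comp
      ((volume_preserving_finTwoArrow ℝ).symm _)
  rw [← hmp.integral_comp', ← integral_comp_polarCoord_symm]
  rfl

noncomputable def uv (θ : ℝ) : EE := !₂[cos θ, sin θ]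

lemma uv_cont : Continuous uv := by unfold uv; fun_prop

lemma uv_norm (θ : ℝ) : ‖uv θ‖ = 1 := by
  have : ‖uv θ‖ ^ 2 = 1 := by
    rw [EuclideanSpace.real_norm_sq_eq]
    simp [uv, Fin.sum_univ_two]
  nlinarith [norm_nonneg (uv θ)]

lemma fderiv_self (ψ : EE → ℝ) (y x : EE) :
    fderiv ℝ ψ y x = x 0 * pd 0 ψ y + x 1 * pd 1 ψ y := by
  have : x = x 0 • EuclideanSpace.single 0 (1:ℝ) + x 1 • EuclideanSpace.single 1 (1:ℝ) := by
    ext i; fin_cases i <;> simp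
  conv_lhs => rw [this]
  simp [pd]

lemma radial0 {ψ : EE → ℝ} (hψ : ContDiff ℝ 1 ψ) (hc : HasCompactSupport ψ) :
    ∫ x : EE, (x 0 * pd 0 ψ x + x 1 * pd 1 ψ x) / ‖x‖ ^ 2 = - (2 * π) * ψ 0 := by
  obtain ⟨R, hR⟩ := hc.isBounded.subset_closedBall (0 : EE)
  have hz : ∀ x : EE, R < ‖x‖ → x ∉ tsupport ψ := by
    intro x hx hx'
    have := hR hx'
    rw [mem_closedBall_zero_iff] at this
    linarith
  let g : ℝ × ℝ → ℝ := fun z => fderiv ℝ ψ (z.1 • uv z.2) (uv z.2)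
  have hgc : Continuous g := by
    have := hψ.continuous_fderiv one_ne_zero
    have h1 : Continuous fun z : ℝ × ℝ => uv z.2 := uv_cont.comp continuous_snd
    exact (this.comp (continuous_fst.smul h1)).clm_apply h1
  have hg0 : ∀ z : ℝ × ℝ, 0 < z.1 → R < z.1 → g z = 0 := by
    intro z h0 h1
    have : fderiv ℝ ψ (z.1 • uv z.2) = 0 := by
      have h2 : z.1 • uv z.2 ∉ tsupport ψ := hz _ (by
        rw [norm_smul, uv_norm, mul_one, Real.norm_of_nonneg h0.le]; exact h1)
      exact fderiv_of_notMem_tsupport ℝ h2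
    simp [g, this]
  have hgi : IntegrableOn g (Set.Ioi 0 ×ˢ Set.Ioo (-π) π) := by
    have hK : IntegrableOn g (Set.Icc 0 R ×ˢ Set.Icc (-π) π) :=
      hgc.continuousOn.integrableOn_compact (isCompact_Icc.prod isCompact_Icc)
    refine IntegrableOn.of_forall_sdiff_eq_zero hK
      (measurableSet_Ioi.prod measurableSet_Ioo) ?_
    rintro z ⟨⟨h1, h2⟩, h3⟩
    refine hg0 z h1 ?_
    by_contra h
    exact h3 ⟨⟨le_of_lt h1, not_lt.1 h⟩, ⟨h2.1.le, h2.2.le⟩⟩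
  rw [int_polar]
  have e1 : ∫ z in polarCoord.target, z.1 * (fun x : EE =>
      (x 0 * pd 0 ψ x + x 1 * pd 1 ψ x) / ‖x‖ ^ 2) (!₂[z.1 * cos z.2, z.1 * sin z.2])
      = ∫ z in Set.Ioi 0 ×ˢ Set.Ioo (-π) π, g z := by
    refine setIntegral_congr_fun (measurableSet_Ioi.prod measurableSet_Ioo) ?_
    rintro z ⟨h1, -⟩
    have h1' : (0:ℝ) < z.1 := h1
    have hx : (!₂[z.1 * cos z.2, z.1 * sin z.2] : EE) = z.1 • uv z.2 := by
      ext i; fin_cases i <;> simp [uv]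
    have key : ∀ x : EE, x = z.1 • uv z.2 →
        z.1 * ((x 0 * pd 0 ψ x + x 1 * pd 1 ψ x) / ‖x‖ ^ 2) = g z := by
      rintro _ rfl
      rw [← fderiv_self, norm_smul, uv_norm, map_smul, smul_eq_mul, mul_one,
        Real.norm_of_nonneg h1'.le]
      simp only [g]
      field_simp
    exact key _ hx
  refine e1.trans ?_
  rw [Measure.volume_eq_prod] at hgi ⊢
  rw [← Measure.prod_restrict]
  rw [IntegrableOn, ← Measure.prod_restrict] at hgi
  rw [integral_prod_symm _ hgi]
  have inner : ∀ θ : ℝ, ∫ r in Set.Ioi (0:ℝ), g (r, θ) = - ψ 0 := by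
    intro θ
    have hd : ∀ r : ℝ, HasDerivAt (fun r : ℝ => ψ (r • uv θ)) (g (r, θ)) r := by
      intro r
      have h1 : HasDerivAt (fun r : ℝ => r • uv θ) (uv θ) r := by
        simpa using (hasDerivAt_id r).smul_const (uv θ)
      exact ((hψ.differentiable one_ne_zero) (r • uv θ)).hasFDerivAt.comp_hasDerivAt r h1
    have hi : IntegrableOn (fun r => g (r, θ)) (Set.Ioi 0) := by
      refine IntegrableOn.of_forall_sdiff_eq_zero (s := Set.Icc 0 R)
        (Continuous.integrableOn_Icc (by fun_prop)) measurableSet_Ioi ?_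
      rintro r ⟨h1, h3⟩
      refine hg0 (r, θ) h1 ?_
      by_contra h
      exact h3 ⟨le_of_lt h1, not_lt.1 h⟩
    have ht : Filter.Tendsto (fun r : ℝ => ψ (r • uv θ)) Filter.atTop (nhds 0) := by
      refine tendsto_const_nhds.congr' ?_
      filter_upwards [Filter.eventually_gt_atTop (max 0 R)] with r hr
      symm
      refine image_eq_zero_of_notMem_tsupport (hz _ ?_)
      rw [norm_smul, uv_norm, mul_one, Real.norm_of_nonneg ((le_max_left _ _).trans hr.le)]
      exact (le_max_right _ _).trans_lt hr
    have := integral_Ioi_of_hasDerivAt_of_tendsto' (fun r _ => hd r) hi ht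
    simpa using this
  simp_rw [inner]
  have hpi : (0:ℝ) ≤ π + π := by positivity
  simp [hpi]
  left
  ring

lemma radial (q : EE) {ψ : EE → ℝ} (hψ : ContDiff ℝ 1 ψ) (hc : HasCompactSupport ψ) :
    ∫ x : EE, ((x 0 - q 0) * pd 0 ψ x + (x 1 - q 1) * pd 1 ψ x) / ‖x - q‖ ^ 2
      = - (2 * π) * ψ q := by
  have h1 : ContDiff ℝ 1 (fun x => ψ (x + q)) := hψ.comp (by fun_prop)
  have h2 : HasCompactSupport (fun x => ψ (x + q)) := hc.comp_homeomorph (Homeomorph.addRight q)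
  have h3 := radial0 h1 h2
  have h4 : ∀ α x, pd α (fun x => ψ (x + q)) x = pd α ψ (x + q) := by
    intro α x
    simp [pd, fderiv_comp_add_right]
  simp only [h4, zero_add] at h3
  rw [← h3, ← integral_add_right_eq_self _ q]
  simp


lemma iadd {f g : EE → ℝ} (hf : Integrable f) (hg : Integrable g) :
    Integrable (fun x => f x + g x) := hf.add hg

noncomputable def KK (q : EE) (α : Fin 2) (x : EE) : ℝ := (x α - q α) / ‖x - q‖ ^ 2
noncomputable def NN (q : EE) (α β : Fin 2) (x : EE) : ℝ :=
  (x α - q α) * (x β - q β) / ‖x - q‖ ^ 2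
noncomputable def LL (q : EE) (x : EE) : ℝ := 1 / 2 * Real.log (‖x - q‖ ^ 2)

lemma KK_meas (q α) : Measurable (KK q α) := by unfold KK; fun_prop
lemma NN_meas (q α β) : Measurable (NN q α β) := by unfold NN; fun_prop
lemma LL_meas (q) : Measurable (LL q) := by unfold LL; fun_prop

lemma KK_bd (q α x) : |KK q α x| ≤ HH (x - q) := by
  have := K_bound q x α le_rfl
  rw [add_zero] at this
  exact this.trans (inv_le_HH _)

lemma NN_bd (q α β x) : |NN q α β x| ≤ 1 := by
  unfold NN
  rw [abs_div, abs_mul, abs_of_nonneg (by positivity : 0 ≤ ‖x - q‖ ^ 2)]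
  refine div_le_one_of_le₀ ?_ (by positivity)
  rw [sq]
  exact mul_le_mul (coord_le q x α) (coord_le q x β) (abs_nonneg _) (norm_nonneg _)

lemma LL_bd (q x) : |LL q x| ≤ ‖x - q‖⁻¹ + ‖x - q‖ := log_bound' q x

lemma KK_int (q α) {g : EE → ℝ} (hg : Continuous g) (hc : HasCompactSupport g) :
    Integrable (fun x => KK q α x * g x) :=
  testInt q 1 _ (KK_meas q α) (fun x => by rw [one_mul]; exact KK_bd q α x) g hg hc

lemma NN_int (q α β) {g : EE → ℝ} (hg : Continuous g) (hc : HasCompactSupport g) :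
    Integrable (fun x => NN q α β x * g x) :=
  testInt q 1 _ (NN_meas q α β) (fun x => by
    have := NN_bd q α β x
    have h0 : 0 ≤ ‖x - q‖⁻¹ := by positivity
    have h1 := norm_nonneg (x - q)
    unfold HH; linarith) g hg hc

lemma LL_int (q) {g : EE → ℝ} (hg : Continuous g) (hc : HasCompactSupport g) :
    Integrable (fun x => LL q x * g x) :=
  testInt q 1 _ (LL_meas q) (fun x => by
    have := LL_bd q x
    unfold HH; linarith) g hg hc

lemma smooth_one {ψ : EE → ℝ} (h : ContDiff ℝ (⊤ : ℕ∞) ψ) : ContDiff ℝ 1 ψ :=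
  contDiff_infty.1 h 1

lemma KK_rad (q : EE) {ψ : EE → ℝ} (h : ContDiff ℝ (⊤ : ℕ∞) ψ) (hc : HasCompactSupport ψ) :
    ∫ x : EE, KK q 0 x * pd 0 ψ x + KK q 1 x * pd 1 ψ x = - (2 * π) * ψ q := by
  rw [← radial q (smooth_one h) hc]
  refine integral_congr_ae (Filter.Eventually.of_forall fun x => ?_)
  simp only [KK, div_eq_mul_inv]
  ring

lemma KK_rad' (q : EE) {ψ : EE → ℝ} (h : ContDiff ℝ (⊤ : ℕ∞) ψ) (hc : HasCompactSupport ψ) :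
    (∫ x : EE, KK q 0 x * pd 0 ψ x) + (∫ x : EE, KK q 1 x * pd 1 ψ x) = - (2 * π) * ψ q := by
  rw [← KK_rad q h hc, integral_add]
  · exact KK_int q 0 (pd_cont 0 (smooth_one h)) (pd_cs 0 hc)
  · exact KK_int q 1 (pd_cont 1 (smooth_one h)) (pd_cs 1 hc)

lemma LL_weak (q : EE) (α : Fin 2) {ψ : EE → ℝ} (h : ContDiff ℝ (⊤ : ℕ∞) ψ)
    (hc : HasCompactSupport ψ) :
    ∫ x : EE, LL q x * pd α ψ x = - ∫ x : EE, KK q α x * ψ x :=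
  weakLog q α (smooth_one h) hc

lemma KK_curl (q : EE) {ψ : EE → ℝ} (h : ContDiff ℝ (⊤ : ℕ∞) ψ) (hc : HasCompactSupport ψ) :
    ∫ x : EE, KK q 1 x * pd 0 ψ x = ∫ x : EE, KK q 0 x * pd 1 ψ x := by
  have h1 := LL_weak q 1 (pd_smooth 0 h) (pd_cs 0 hc)
  have h2 := LL_weak q 0 (pd_smooth 1 h) (pd_cs 1 hc)
  simp_rw [pd_comm h] at h1
  linarith

lemma pd_S (q : EE) (α : Fin 2) {φ : EE → ℝ} (h : ContDiff ℝ (⊤ : ℕ∞) φ) (x : EE) :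
    pd α (fun x => (x 0 - q 0) * pd 0 φ x + (x 1 - q 1) * pd 1 φ x) x
      = pd α φ x + (x 0 - q 0) * pd α (pd 0 φ) x + (x 1 - q 1) * pd α (pd 1 φ) x := by
  have hc : ∀ β : Fin 2, HasFDerivAt (fun x : EE => x β - q β)
      (EuclideanSpace.proj β : EE →L[ℝ] ℝ) x := fun β =>
    (EuclideanSpace.proj β : EE →L[ℝ] ℝ).hasFDerivAt.sub_const (q β)
  have hd : ∀ β : Fin 2, HasFDerivAt (pd β φ) (fderiv ℝ (pd β φ) x) x := fun β =>
    ((pd_smooth β h).differentiable (by simp) x).hasFDerivAt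
  have := (((hc 0).mul (hd 0)).add ((hc 1).mul (hd 1))).fderiv
  have e : fderiv ℝ (fun x : EE => (x 0 - q 0) * pd 0 φ x + (x 1 - q 1) * pd 1 φ x) x = _ := this
  conv_lhs => unfold pd
  change fderiv ℝ (fun x : EE => (x 0 - q 0) * pd 0 φ x + (x 1 - q 1) * pd 1 φ x) x _ = _
  rw [e]
  fin_cases α
  · simp [pd]; ring
  · simp [pd]; ring

lemma NN_rad (q : EE) {φ : EE → ℝ} (h : ContDiff ℝ (⊤ : ℕ∞) φ) (hc : HasCompactSupport φ) :
    (∫ x : EE, NN q 0 0 x * pd 0 (pd 0 φ) x) + 2 * (∫ x : EE, NN q 0 1 x * pd 0 (pd 1 φ) x)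
      + (∫ x : EE, NN q 1 1 x * pd 1 (pd 1 φ) x) = 2 * π * φ q := by
  have sm : ∀ α β, ContDiff ℝ 1 (pd α (pd β φ)) := fun α β =>
    smooth_one (pd_smooth α (pd_smooth β h))
  have c2 : ∀ α β, Continuous (pd α (pd β φ)) := fun α β => (sm α β).continuous
  have k2 : ∀ α β, HasCompactSupport (pd α (pd β φ)) := fun α β => pd_cs α (pd_cs β hc)
  have c1 : ∀ α, Continuous (pd α φ) := fun α => pd_cont α (smooth_one h)
  have k1 : ∀ α, HasCompactSupport (pd α φ) := fun α => pd_cs α hc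
  have hS : ContDiff ℝ (⊤ : ℕ∞) (fun x : EE => (x 0 - q 0) * pd 0 φ x + (x 1 - q 1) * pd 1 φ x) := by
    have h0 := pd_smooth 0 h
    have h1 := pd_smooth 1 h
    fun_prop
  have hSc : HasCompactSupport (fun x : EE => (x 0 - q 0) * pd 0 φ x + (x 1 - q 1) * pd 1 φ x) :=
    (k1 0).mul_left.add (k1 1).mul_left
  have h1 := KK_rad q hS hSc
  simp only [pd_S q _ h, sub_self, zero_mul, add_zero, mul_zero, pd_comm h] at h1
  have h2 : ∀ x : EE, KK q 0 x * (pd 0 φ x + (x 0 - q 0) * pd 0 (pd 0 φ) x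
        + (x 1 - q 1) * pd 0 (pd 1 φ) x)
      + KK q 1 x * (pd 1 φ x + (x 0 - q 0) * pd 0 (pd 1 φ) x + (x 1 - q 1) * pd 1 (pd 1 φ) x)
      = (KK q 0 x * pd 0 φ x + KK q 1 x * pd 1 φ x) + (NN q 0 0 x * pd 0 (pd 0 φ) x
        + 2 * (NN q 0 1 x * pd 0 (pd 1 φ) x) + NN q 1 1 x * pd 1 (pd 1 φ) x) := by
    intro x
    simp only [KK, NN, div_eq_mul_inv]
    ring
  simp_rw [h2] at h1
  have i0 := NN_int q 0 0 (c2 0 0) (k2 0 0)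
  have i1 := (NN_int q 0 1 (c2 0 1) (k2 0 1)).const_mul 2
  have i2 := NN_int q 1 1 (c2 1 1) (k2 1 1)
  have j0 := KK_int q 0 (c1 0) (k1 0)
  have j1 := KK_int q 1 (c1 1) (k1 1)
  rw [integral_add (iadd j0 j1) (iadd (iadd i0 i1) i2), KK_rad q h hc,
    integral_add (iadd i0 i1) i2, integral_add i0 i1, integral_const_mul] at h1
  linarith

lemma LL_lap (q : EE) {φ : EE → ℝ} (h : ContDiff ℝ (⊤ : ℕ∞) φ) (hc : HasCompactSupport φ) :
    (∫ x : EE, LL q x * pd 0 (pd 0 φ) x) + (∫ x : EE, LL q x * pd 1 (pd 1 φ) x)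
      = 2 * π * φ q := by
  rw [LL_weak q 0 (pd_smooth 0 h) (pd_cs 0 hc), LL_weak q 1 (pd_smooth 1 h) (pd_cs 1 hc)]
  have := KK_rad' q h hc
  linarith

lemma tExz_eq (b3 : ℝ) (q x : EE) : tExz b3 q x = -(b3 / (2 * π)) * KK q 1 x := by
  unfold tExz KK
  rw [r2_eq]
  simp only [div_eq_mul_inv, mul_inv]
  ring

lemma tEyz_eq (b3 : ℝ) (q x : EE) : tEyz b3 q x = (b3 / (2 * π)) * KK q 0 x := by
  unfold tEyz KK
  rw [r2_eq]
  simp only [div_eq_mul_inv, mul_inv]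
  ring

lemma tExx_eq (o b1 b2 : ℝ) (q x : EE) : tExx o b1 b2 q x =
    -(b2 / (2 * π)) * KK q 0 x - b1 / (2 * π) * KK q 1 x
      + o / (4 * π) * (LL q x + NN q 1 1 x) := by
  unfold tExx KK LL NN
  rw [logsqrt, r2_eq]
  simp only [div_eq_mul_inv, mul_inv]
  ring

lemma tExy_eq (o b1 b2 : ℝ) (q x : EE) : tExy o b1 b2 q x =
    -(b2 / (2 * π)) * KK q 1 x + b1 / (2 * π) * KK q 0 x
      - o / (4 * π) * NN q 0 1 x := by
  unfold tExy KK NN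
  rw [r2_eq]
  simp only [div_eq_mul_inv, mul_inv]
  ring

lemma tEyy_eq (o b1 b2 : ℝ) (q x : EE) : tEyy o b1 b2 q x =
    (b2 / (2 * π)) * KK q 0 x + b1 / (2 * π) * KK q 1 x
      + o / (4 * π) * (LL q x + NN q 0 0 x) := by
  unfold tEyy KK LL NN
  rw [logsqrt, r2_eq]
  simp only [div_eq_mul_inv, mul_inv]
  ring

lemma single_screw (b3 : ℝ) (q : EE) {φ : EE → ℝ} (h : ContDiff ℝ (⊤ : ℕ∞) φ)
    (hc : HasCompactSupport φ) :
    (∫ x : EE, tExz b3 q x * pd 1 φ x) - (∫ x : EE, tEyz b3 q x * pd 0 φ x) = b3 * φ q := by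
  simp_rw [tExz_eq, tEyz_eq, mul_assoc, integral_const_mul]
  have := KK_rad' q h hc
  have e : ∀ a b : ℝ, -(b3 / (2 * π)) * a - b3 / (2 * π) * b = -(b3 / (2 * π)) * (b + a) := by
    intro a b; ring
  rw [e, this]
  field_simp

lemma single_edge (o b1 b2 : ℝ) (q : EE) {φ : EE → ℝ} (h : ContDiff ℝ (⊤ : ℕ∞) φ)
    (hc : HasCompactSupport φ) :
    (∫ x : EE, tExx o b1 b2 q x * pd 1 (pd 1 φ) x) + (∫ x : EE, tEyy o b1 b2 q x * pd 0 (pd 0 φ) x)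
      - 2 * (∫ x : EE, tExy o b1 b2 q x * pd 0 (pd 1 φ) x)
      = o * φ q + b2 * (-(pd 0 φ q)) - b1 * (-(pd 1 φ q)) := by
  have c2 : ∀ α β, Continuous (pd α (pd β φ)) := fun α β =>
    (pd_smooth α (pd_smooth β h)).continuous
  have k2 : ∀ α β, HasCompactSupport (pd α (pd β φ)) := fun α β => pd_cs α (pd_cs β hc)
  have ik := fun γ α β => KK_int q γ (c2 α β) (k2 α β)
  have il := fun α β => LL_int q (c2 α β) (k2 α β)
  have inn := fun γ δ α β => NN_int q γ δ (c2 α β) (k2 α β)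
  have exx : ∫ x : EE, tExx o b1 b2 q x * pd 1 (pd 1 φ) x
      = -(b2 / (2 * π)) * (∫ x : EE, KK q 0 x * pd 1 (pd 1 φ) x)
        + -(b1 / (2 * π)) * (∫ x : EE, KK q 1 x * pd 1 (pd 1 φ) x)
        + o / (4 * π) * ((∫ x : EE, LL q x * pd 1 (pd 1 φ) x)
          + ∫ x : EE, NN q 1 1 x * pd 1 (pd 1 φ) x) := by
    rw [← integral_add (il 1 1) (inn 1 1 1 1), ← integral_const_mul, ← integral_const_mul,
      ← integral_const_mul, ← integral_add ((ik 0 1 1).const_mul _) ((ik 1 1 1).const_mul _),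
      ← integral_add (iadd ((ik 0 1 1).const_mul _) ((ik 1 1 1).const_mul _))
        ((iadd (il 1 1) (inn 1 1 1 1)).const_mul _)]
    refine integral_congr_ae (Filter.Eventually.of_forall fun x => ?_)
    simp only [tExx_eq, Pi.add_apply]
    ring
  have eyy : ∫ x : EE, tEyy o b1 b2 q x * pd 0 (pd 0 φ) x
      = (b2 / (2 * π)) * (∫ x : EE, KK q 0 x * pd 0 (pd 0 φ) x)
        + (b1 / (2 * π)) * (∫ x : EE, KK q 1 x * pd 0 (pd 0 φ) x)
        + o / (4 * π) * ((∫ x : EE, LL q x * pd 0 (pd 0 φ) x)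
          + ∫ x : EE, NN q 0 0 x * pd 0 (pd 0 φ) x) := by
    rw [← integral_add (il 0 0) (inn 0 0 0 0), ← integral_const_mul, ← integral_const_mul,
      ← integral_const_mul, ← integral_add ((ik 0 0 0).const_mul _) ((ik 1 0 0).const_mul _),
      ← integral_add (iadd ((ik 0 0 0).const_mul _) ((ik 1 0 0).const_mul _))
        ((iadd (il 0 0) (inn 0 0 0 0)).const_mul _)]
    refine integral_congr_ae (Filter.Eventually.of_forall fun x => ?_)
    simp only [tEyy_eq, Pi.add_apply]
    ring
  have exy : ∫ x : EE, tExy o b1 b2 q x * pd 0 (pd 1 φ) x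
      = -(b2 / (2 * π)) * (∫ x : EE, KK q 1 x * pd 0 (pd 1 φ) x)
        + (b1 / (2 * π)) * (∫ x : EE, KK q 0 x * pd 0 (pd 1 φ) x)
        + -(o / (4 * π)) * (∫ x : EE, NN q 0 1 x * pd 0 (pd 1 φ) x) := by
    rw [← integral_const_mul, ← integral_const_mul,
      ← integral_const_mul, ← integral_add ((ik 1 0 1).const_mul _) ((ik 0 0 1).const_mul _),
      ← integral_add (iadd ((ik 1 0 1).const_mul _) ((ik 0 0 1).const_mul _))
        ((inn 0 1 0 1).const_mul _)]
    refine integral_congr_ae (Filter.Eventually.of_forall fun x => ?_)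
    simp only [tExy_eq, Pi.add_apply]
    ring
  have r0 := KK_rad' q (pd_smooth 0 h) (pd_cs 0 hc)
  have r1 := KK_rad' q (pd_smooth 1 h) (pd_cs 1 hc)
  have u0 := KK_curl q (pd_smooth 0 h) (pd_cs 0 hc)
  have u1 := KK_curl q (pd_smooth 1 h) (pd_cs 1 hc)
  simp_rw [pd_comm h] at r0 u0
  have n := NN_rad q h hc
  have l := LL_lap q h hc
  rw [exx, eyy, exy]
  have f1 : b2 / (2 * π) * (2 * π) = b2 := by field_simp
  have f2 : b1 / (2 * π) * (2 * π) = b1 := by field_simp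
  have f3 : o / (4 * π) * (4 * π) = o := by field_simp
  linear_combination (b2 / (2 * π)) * r0 - (b1 / (2 * π)) * r1 + (b1 / (2 * π)) * u0
    + (b2 / (2 * π)) * u1 + (o / (4 * π)) * n + (o / (4 * π)) * l
    - pd 0 φ q * f1 + pd 1 φ q * f2 + φ q * f3


lemma coef_bd (a c X Y : ℝ) (hc : 1 ≤ c) (h : |X| ≤ Y) : |a / c * X| ≤ |a| * Y := by
  rw [abs_mul, abs_div, abs_of_pos (by linarith : 0 < c)]
  exact mul_le_mul (div_le_self (abs_nonneg _) hc) h (abs_nonneg _) (abs_nonneg _)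

lemma two_pi_ge : 1 ≤ 2 * π := by linarith [Real.pi_gt_three]
lemma four_pi_ge : 1 ≤ 4 * π := by linarith [Real.pi_gt_three]

lemma NN_bd' (q α β x) : |NN q α β x| ≤ HH (x - q) := by
  have := NN_bd q α β x
  have h0 : 0 ≤ ‖x - q‖⁻¹ := by positivity
  have h1 := norm_nonneg (x - q)
  unfold HH; linarith

lemma LN_bd (q α β x) : |LL q x + NN q α β x| ≤ HH (x - q) := by
  have := NN_bd q α β x
  have h0 := LL_bd q x
  have h1 := abs_add_le (LL q x) (NN q α β x)
  unfold HH; linarith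

lemma three_bd {o b1 b2 b3 H A B C t : ℝ} (hH : 0 ≤ H) (hA : |A| ≤ |b2| * H)
    (hB : |B| ≤ |b1| * H) (hC : |C| ≤ |o| * H) (ht : |t| ≤ |A| + |B| + |C|) :
    |t| ≤ (|o| + |b1| + |b2| + |b3|) * H := by
  have : 0 ≤ |b3| * H := by positivity
  linarith

section goods
variable {p : ℕ → EE} {Ω : ℕ → ℝ} {b : ℕ → Fin 3 → ℝ}

lemma good_xz (hp : Bornology.IsBounded (Set.range p))
    (hs : Summable fun i => |Ω i| + |b i 0| + |b i 1| + |b i 2|) :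
    Good p (fun i => |Ω i| + |b i 0| + |b i 1| + |b i 2|) (fun i => tExz (b i 2) (p i)) := by
  refine ⟨hp, hs, fun i => ?_, fun i x => ?_⟩
  · have : tExz (b i 2) (p i) = fun x => -(b i 2 / (2 * π)) * KK (p i) 1 x :=
      funext fun x => tExz_eq _ _ _
    rw [this]
    exact (KK_meas _ _).const_mul _
  · rw [tExz_eq, neg_mul, abs_neg]
    refine (coef_bd _ _ _ _ two_pi_ge (KK_bd _ _ _)).trans ?_
    refine mul_le_mul_of_nonneg_right ?_ (HH_nonneg _)
    have := abs_nonneg (Ω i)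
    have := abs_nonneg (b i 0)
    have := abs_nonneg (b i 1)
    linarith

lemma good_yz (hp : Bornology.IsBounded (Set.range p))
    (hs : Summable fun i => |Ω i| + |b i 0| + |b i 1| + |b i 2|) :
    Good p (fun i => |Ω i| + |b i 0| + |b i 1| + |b i 2|) (fun i => tEyz (b i 2) (p i)) := by
  refine ⟨hp, hs, fun i => ?_, fun i x => ?_⟩
  · have : tEyz (b i 2) (p i) = fun x => (b i 2 / (2 * π)) * KK (p i) 0 x :=
      funext fun x => tEyz_eq _ _ _
    rw [this]
    exact (KK_meas _ _).const_mul _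
  · rw [tEyz_eq]
    refine (coef_bd _ _ _ _ two_pi_ge (KK_bd _ _ _)).trans ?_
    refine mul_le_mul_of_nonneg_right ?_ (HH_nonneg _)
    have := abs_nonneg (Ω i)
    have := abs_nonneg (b i 0)
    have := abs_nonneg (b i 1)
    linarith

lemma good_xx (hp : Bornology.IsBounded (Set.range p))
    (hs : Summable fun i => |Ω i| + |b i 0| + |b i 1| + |b i 2|) :
    Good p (fun i => |Ω i| + |b i 0| + |b i 1| + |b i 2|)
      (fun i => tExx (Ω i) (b i 0) (b i 1) (p i)) := by
  refine ⟨hp, hs, fun i => ?_, fun i x => ?_⟩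
  · rw [show tExx (Ω i) (b i 0) (b i 1) (p i) = _ from funext fun x => tExx_eq _ _ _ _ _]
    exact (((KK_meas _ _).const_mul _).sub ((KK_meas _ _).const_mul _)).add
      (((LL_meas _).add (NN_meas _ _ _)).const_mul _)
  · refine three_bd (HH_nonneg _) (coef_bd (b i 1) _ _ _ two_pi_ge (KK_bd (p i) 0 x))
      (coef_bd (b i 0) _ _ _ two_pi_ge (KK_bd (p i) 1 x))
      (coef_bd (Ω i) _ _ _ four_pi_ge (LN_bd (p i) 1 1 x)) ?_
    rw [tExx_eq, neg_mul]
    refine (abs_add_le _ _).trans (add_le_add ((abs_sub _ _).trans ?_) le_rfl)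
    rw [abs_neg]

lemma good_xy (hp : Bornology.IsBounded (Set.range p))
    (hs : Summable fun i => |Ω i| + |b i 0| + |b i 1| + |b i 2|) :
    Good p (fun i => |Ω i| + |b i 0| + |b i 1| + |b i 2|)
      (fun i => tExy (Ω i) (b i 0) (b i 1) (p i)) := by
  refine ⟨hp, hs, fun i => ?_, fun i x => ?_⟩
  · rw [show tExy (Ω i) (b i 0) (b i 1) (p i) = _ from funext fun x => tExy_eq _ _ _ _ _]
    exact (((KK_meas _ _).const_mul _).add ((KK_meas _ _).const_mul _)).sub
      ((NN_meas _ _ _).const_mul _)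
  · refine three_bd (HH_nonneg _) (coef_bd (b i 1) _ _ _ two_pi_ge (KK_bd (p i) 1 x))
      (coef_bd (b i 0) _ _ _ two_pi_ge (KK_bd (p i) 0 x))
      (coef_bd (Ω i) _ _ _ four_pi_ge (NN_bd' (p i) 0 1 x)) ?_
    rw [tExy_eq, neg_mul]
    refine (abs_sub _ _).trans (add_le_add ((abs_add_le _ _).trans ?_) le_rfl)
    rw [abs_neg]

lemma good_yy (hp : Bornology.IsBounded (Set.range p))
    (hs : Summable fun i => |Ω i| + |b i 0| + |b i 1| + |b i 2|) :
    Good p (fun i => |Ω i| + |b i 0| + |b i 1| + |b i 2|)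
      (fun i => tEyy (Ω i) (b i 0) (b i 1) (p i)) := by
  refine ⟨hp, hs, fun i => ?_, fun i x => ?_⟩
  · rw [show tEyy (Ω i) (b i 0) (b i 1) (p i) = _ from funext fun x => tEyy_eq _ _ _ _ _]
    exact (((KK_meas _ _).const_mul _).add ((KK_meas _ _).const_mul _)).add
      (((LL_meas _).add (NN_meas _ _ _)).const_mul _)
  · refine three_bd (HH_nonneg _) (coef_bd (b i 1) _ _ _ two_pi_ge (KK_bd (p i) 0 x))
      (coef_bd (b i 0) _ _ _ two_pi_ge (KK_bd (p i) 1 x))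
      (coef_bd (Ω i) _ _ _ four_pi_ge (LN_bd (p i) 0 0 x)) ?_
    rw [tEyy_eq]
    exact (abs_add_le _ _).trans (add_le_add (abs_add_le _ _) le_rfl)

end goods


/-- **Main theorem of the paper (explicit form): incompatibility decomposition for a
countable set of 2D defect lines.** The superposed screw/edge/wedge strains converge
absolutely a.e., are integrable on bounded measurable sets, and their distributional
planar incompatibility and curl are the concentrated first-order distributions
`∑_i (Ω_i δ + b₂ ∂_xδ − b₁ ∂_yδ)` and `∑_i b₃ δ` on the defect set. -/
theorem main_incompatibility_decomposition (p : ℕ → EuclideanSpace ℝ (Fin 2))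
    (hp : Bornology.IsBounded (Set.range p)) (Ω : ℕ → ℝ) (b : ℕ → Fin 3 → ℝ)
    (hsum : Summable fun i => |Ω i| + |b i 0| + |b i 1| + |b i 2|) :
    (∀ᵐ x : EuclideanSpace ℝ (Fin 2),
      (Summable fun i => |tExz (b i 2) (p i) x|) ∧
      (Summable fun i => |tEyz (b i 2) (p i) x|) ∧
      (Summable fun i => |tExx (Ω i) (b i 0) (b i 1) (p i) x|) ∧
      (Summable fun i => |tExy (Ω i) (b i 0) (b i 1) (p i) x|) ∧
      (Summable fun i => |tEyy (Ω i) (b i 0) (b i 1) (p i) x|)) ∧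
    (∀ A : Set (EuclideanSpace ℝ (Fin 2)), MeasurableSet A → Bornology.IsBounded A →
      IntegrableOn (fun x => ∑' i, tExz (b i 2) (p i) x) A volume ∧
      IntegrableOn (fun x => ∑' i, tEyz (b i 2) (p i) x) A volume ∧
      IntegrableOn (fun x => ∑' i, tExx (Ω i) (b i 0) (b i 1) (p i) x) A volume ∧
      IntegrableOn (fun x => ∑' i, tExy (Ω i) (b i 0) (b i 1) (p i) x) A volume ∧
      IntegrableOn (fun x => ∑' i, tEyy (Ω i) (b i 0) (b i 1) (p i) x) A volume) ∧
    (∀ φ : EuclideanSpace ℝ (Fin 2) → ℝ, ContDiff ℝ (⊤ : ℕ∞) φ → HasCompactSupport φ →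
      (Summable fun i => Ω i * φ (p i)
        + b i 1 * (-(pd 0 φ (p i))) - b i 0 * (-(pd 1 φ (p i)))) ∧
      (∫ x : EuclideanSpace ℝ (Fin 2),
          ((∑' i, tExx (Ω i) (b i 0) (b i 1) (p i) x) * pd 1 (pd 1 φ) x
            + (∑' i, tEyy (Ω i) (b i 0) (b i 1) (p i) x) * pd 0 (pd 0 φ) x
            - 2 * (∑' i, tExy (Ω i) (b i 0) (b i 1) (p i) x) * pd 0 (pd 1 φ) x)
        = ∑' i, (Ω i * φ (p i)
            + b i 1 * (-(pd 0 φ (p i))) - b i 0 * (-(pd 1 φ (p i))))) ∧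
      (Summable fun i => b i 2 * φ (p i)) ∧
      (∫ x : EuclideanSpace ℝ (Fin 2),
          ((∑' i, tExz (b i 2) (p i) x) * pd 1 φ x
            - (∑' i, tEyz (b i 2) (p i) x) * pd 0 φ x)
        = ∑' i, b i 2 * φ (p i))) := by
  have hxz := good_xz hp hsum
  have hyz := good_yz hp hsum
  have hxx := good_xx hp hsum
  have hxy := good_xy hp hsum
  have hyy := good_yy hp hsum
  refine ⟨?_, ?_, ?_⟩
  · filter_upwards [hxz.ae, hyz.ae, hxx.ae, hxy.ae, hyy.ae] with x h1 h2 h3 h4 h5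
    exact ⟨h1, h2, h3, h4, h5⟩
  · intro A hA hb
    exact ⟨hxz.intOn A hA hb, hyz.intOn A hA hb, hxx.intOn A hA hb, hxy.intOn A hA hb,
      hyy.intOn A hA hb⟩
  · intro φ h hc
    have c1 : ∀ α, Continuous (pd α φ) := fun α => (pd_smooth α h).continuous
    have k1 : ∀ α, HasCompactSupport (pd α φ) := fun α => pd_cs α hc
    have c2 : ∀ α β, Continuous (pd α (pd β φ)) := fun α β =>
      (pd_smooth α (pd_smooth β h)).continuous
    have k2 : ∀ α β, HasCompactSupport (pd α (pd β φ)) := fun α β => pd_cs α (pd_cs β hc)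
    obtain ⟨-, ixx, sxx⟩ := hxx.test _ (c2 1 1) (k2 1 1)
    obtain ⟨-, iyy, syy⟩ := hyy.test _ (c2 0 0) (k2 0 0)
    obtain ⟨-, ixy, sxy⟩ := hxy.test _ (c2 0 1) (k2 0 1)
    obtain ⟨-, ixz, sxz⟩ := hxz.test _ (c1 1) (k1 1)
    obtain ⟨-, iyz, syz⟩ := hyz.test _ (c1 0) (k1 0)
    have hs1 := (sxx.add syy).sub (sxy.mul_left 2)
    have hs2 := sxz.sub syz
    simp_rw [single_edge _ _ _ _ h hc] at hs1
    simp_rw [single_screw _ _ h hc] at hs2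
    refine ⟨hs1.summable, ?_, hs2.summable, ?_⟩
    · rw [hs1.tsum_eq]
      simp_rw [mul_assoc]
      rw [integral_sub (iadd ixx iyy) (ixy.const_mul 2), integral_add ixx iyy,
        integral_const_mul]
    · rw [hs2.tsum_eq, integral_sub ixz iyz]
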